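/- Let q be a prime power, let m, k be integers with 1 < k < m, let s ∈ {1,...,m} with gcd(s,m)=1, and let {α_1,...,α_t} and {β_1,...,β_t} be two subsets of F_{q^m}∖{0} whose elements have pairwise distinct norms N_s over F_q. Let (U_1,...,U_t) and (V_1,...,V_t) be the linearized Reed–Solomon systems in (F_{q^m})^k determined by (α_1,...,α_t) and (β_1,...,β_t) respectively (both with the same parameter s). Then (U_1,...,U_t) and (V_1,...,V_t) are equivalent if and only if there exists a nonzero ξ ∈ F_q such that {N_s(β_1),...,N_s(β_t)} = {ξ·N_s(α_1),...,ξ·N_s(α_t)} as subsets of F_q. -/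

import Mathlib

open Pointwise

/-- The `j`-th truncated norm `N_s^j(α) = ∏_{i=0}^{j-1} α^{q^{si}}`. -/
def truncNorm (q s j : ℕ) {L : Type*} [Field L] (α : L) : L :=
  ∏ i ∈ Finset.range j, α ^ q ^ (s * i)

/-- The norm `N_s(α) = ∏_{i=0}^{m-1} α^{q^{si}}` of `α ∈ F_{q^m}` over `F_q`. -/
def normS (q s m : ℕ) {L : Type*} [Field L] (α : L) : L :=
  truncNorm q s m α

/-- The component `U = {(x, N_s^1(α)x^{q^s}, …, N_s^{k-1}(α)x^{q^{s(k-1)}}) : x ∈ F_{q^m}}`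
of a linearized Reed–Solomon system. -/
def lrsComp (q s k : ℕ) {L : Type*} [Field L] (α : L) : Set (Fin k → L) :=
  Set.range fun x : L => fun i : Fin k => truncNorm q s (i : ℕ) α * x ^ q ^ (s * (i : ℕ))

/-- Equivalence of `t`-tuples of subsets of `(F_{q^m})^k`. -/
def sysEquiv {L : Type*} [Field L] {k t : ℕ} (U V : Fin t → Set (Fin k → L)) : Prop :=
  ∃ (A : (Fin k → L) ≃ₗ[L] (Fin k → L)) (γ : Fin t → L) (σ : Equiv.Perm (Fin t)),
    (∀ i, γ i ≠ 0) ∧ ∀ i, U i = γ i • (⇑A '' V (σ i))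


section aux

set_option linter.unusedSectionVars false

variable {K L : Type*} [Field K] [Fintype K] [Field L] [Fintype L] [Algebra K L]

/-- The generator of the Galois group used throughout: `x ↦ x^{q^s}`. -/
noncomputable def thetaS (K L : Type*) [Field K] [Fintype K] [Field L] [Fintype L] [Algebra K L]
    (s : ℕ) : L ≃ₐ[K] L :=
  (FiniteField.frobeniusAlgEquivOfAlgebraic K L) ^ s

theorem thetaS_pow (s n : ℕ) (x : L) :
    (thetaS K L s ^ n) x = x ^ (Fintype.card K) ^ (s * n) := by
  rw [thetaS, ← pow_mul, AlgEquiv.coe_pow,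
    FiniteField.coe_frobeniusAlgEquivOfAlgebraic_iterate]

theorem orderOf_thetaS (s : ℕ) (h : Nat.gcd s (Module.finrank K L) = 1) :
    orderOf (thetaS K L s) = Module.finrank K L := by
  have := FiniteField.orderOf_frobeniusAlgEquivOfAlgebraic K L
  rw [thetaS, Nat.Coprime.orderOf_pow, this]
  rw [this]
  exact Nat.Coprime.symm h

theorem coeff_zero (g : L ≃ₐ[K] L) {ι : Type*} [Fintype ι] (f : ι → ℕ) (a : ι → L) (e : ι)
    (hf : ∀ i, f i ≡ f e [MOD orderOf g] → i = e)
    (h : ∀ y, ∑ i, a i * (g ^ f i) y = 0) : a e = 0 := by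
  classical
  have hli : LinearIndependent L (fun (f : L ≃ₐ[K] L) => (f : L → L)) :=
    LinearIndependent.comp (ι' := L ≃ₐ[K] L)
      (linearIndependent_monoidHom L L) (fun f => f)
      (fun x y h => by ext; exact DFunLike.ext_iff.1 h _)
  have h2 := linearIndependent_iff.1 hli (∑ i, Finsupp.single (g ^ f i) (a i)) (by
    rw [map_sum]
    ext y
    simpa [Finsupp.linearCombination_single] using h y)
  have h3 := DFunLike.congr_fun h2 (g ^ f e)
  rw [Finsupp.finsetSum_apply, Finset.sum_eq_single e] at h3
  · simpa using h3
  · intro i _ hi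
    rw [Finsupp.single_apply, if_neg]
    intro h4
    exact hi (hf i (pow_eq_pow_iff_modEq.1 h4))
  · simp

/-- truncated norm with respect to an automorphism -/
def tn (g : L ≃ₐ[K] L) (j : ℕ) (x : L) : L := ∏ i ∈ Finset.range j, (g ^ i) x

theorem truncNorm_eq (s j : ℕ) (x : L) :
    truncNorm (Fintype.card K) s j x = tn (thetaS K L s) j x := by
  simp [truncNorm, tn, thetaS_pow]

theorem tn_mul (g : L ≃ₐ[K] L) (j : ℕ) (x y : L) : tn g j (x * y) = tn g j x * tn g j y := by
  simp [tn, Finset.prod_mul_distrib]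

theorem tn_ne_zero (g : L ≃ₐ[K] L) (j : ℕ) (x : L) (hx : x ≠ 0) : tn g j x ≠ 0 := by
  exact Finset.prod_ne_zero_iff.2 fun i _ => (map_ne_zero_iff _ (g ^ i).injective).2 hx

theorem tn_succ (g : L ≃ₐ[K] L) (j : ℕ) (x : L) : tn g (j + 1) x = x * g (tn g j x) := by
  rw [tn, Finset.prod_range_succ', tn, map_prod, mul_comm]
  congr 1
  exact Finset.prod_congr rfl fun i _ => by rw [pow_succ', AlgEquiv.mul_apply]

theorem tn_one (g : L ≃ₐ[K] L) (x : L) : tn g 1 x = x := by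
  simp [tn]

/-- Telescoping. -/
theorem tn_apply_mul (g : L ≃ₐ[K] L) (j : ℕ) (c : L) : tn g j (g c) * c = tn g j c * (g ^ j) c := by
  induction j with
  | zero => simp [tn]
  | succ j ih =>
    simp only [tn, Finset.prod_range_succ] at ih ⊢
    have : (g ^ j) (g c) = (g ^ (j + 1)) c := by rw [pow_succ, AlgEquiv.mul_apply]
    rw [this]
    linear_combination (g ^ (j + 1)) c * ih

theorem tn_orderOf (g : L ≃ₐ[K] L) (h : orderOf g = Module.finrank K L) (x : L) :
    tn g (Module.finrank K L) x = algebraMap K L (Algebra.norm K x) := by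
  have hinj : Function.Injective fun n : Fin (Module.finrank K L) ↦ g ^ n.1 := by
    intro a b hab
    ext
    exact pow_injOn_Iio_orderOf (by simp [h]) (by simp [h]) hab
  have hbij := (Fintype.bijective_iff_injective_and_card _).2 ⟨hinj, by
    rw [Fintype.card_fin, ← Nat.card_eq_fintype_card, IsGalois.card_aut_eq_finrank]⟩
  rw [Algebra.norm_eq_prod_automorphisms, tn, Finset.prod_range]
  exact Finset.prod_bijective _ hbij (by simp) (by simp)

theorem hilbert90 (g : L ≃ₐ[K] L) (x : L) (hm : 0 < orderOf g)
    (hx : tn g (orderOf g) x = 1) : ∃ b : L, b ≠ 0 ∧ x * g b = b := by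
  by_contra! hcon
  set m := orderOf g with hmdef
  have hsum : ∀ z, ∑ i : Fin m, tn g i x * (g ^ (i : ℕ)) z = 0 := by
    intro z
    by_contra hz
    refine hcon _ hz ?_
    rw [Fin.sum_univ_eq_sum_range (fun i => tn g i x * (g ^ i) z), map_sum, Finset.mul_sum]
    have h1 : ∀ i, x * g (tn g i x * (g ^ i) z) = tn g (i + 1) x * (g ^ (i + 1)) z := by
      intro i
      rw [tn_succ, map_mul, pow_succ', AlgEquiv.mul_apply, mul_assoc]
    simp only [h1]
    have h2 := Finset.sum_range_succ' (fun i => tn g i x * (g ^ i) z) m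
    rw [Finset.sum_range_succ] at h2
    have h3 : tn g m x * (g ^ m) z = tn g 0 x * (g ^ 0) z := by
      rw [hx, hmdef, pow_orderOf_eq_one]; simp [tn]
    rw [h3] at h2
    exact (add_right_cancel h2).symm
  have := coeff_zero g (fun i : Fin m => (i : ℕ)) (fun i => tn g i x) ⟨0, hm⟩ (by
    intro i hi
    ext
    exact Nat.ModEq.eq_of_lt_of_lt hi i.2 hm) hsum
  simp [tn] at this

theorem rigid (g : L ≃ₐ[K] L) (k : ℕ) (hk : 1 < k) (hkm : k < orderOf g)
    (M : Matrix (Fin k) (Fin k) L) (a b c : L) (hc : c ≠ 0) (ha : a ≠ 0) (hb : b ≠ 0)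
    (h1 : ∀ y, ∃ x, ∀ j : Fin k, tn g j a * (g ^ (j : ℕ)) x =
      c * ∑ l, M j l * (tn g l b * (g ^ (l : ℕ)) y))
    (h2 : ∃ y, c * ∑ l, M ⟨0, by omega⟩ l * (tn g l b * (g ^ (l : ℕ)) y) ≠ 0) :
    M ⟨0, by omega⟩ ⟨0, by omega⟩ ≠ 0 ∧
    a * g (c * M ⟨0, by omega⟩ ⟨0, by omega⟩) = c * M ⟨1, hk⟩ ⟨1, hk⟩ * b := by
  classical
  set o : Fin k := ⟨0, by omega⟩ with ho
  have key : ∀ (j : Fin k) y, ∑ l, tn g j a * (g ^ (j : ℕ)) (c * M o l * tn g l b) *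
      (g ^ ((l : ℕ) + j)) y = ∑ l, c * M j l * tn g l b * (g ^ (l : ℕ)) y := by
    intro j y
    obtain ⟨x, hx⟩ := h1 y
    have hx0 : x = c * ∑ l, M o l * (tn g l b * (g ^ (l : ℕ)) y) := by
      rw [← hx o]; simp [tn, ho]
    have hj := hx j
    rw [hx0, Finset.mul_sum, Finset.mul_sum, map_sum, Finset.mul_sum] at hj
    convert hj using 2 with l _ l _
    · rw [add_comm, pow_add, AlgEquiv.mul_apply, mul_assoc, ← map_mul]
      congr 2; ring
    · ring
  have hz : ∀ d : Fin k, d ≠ o → M o d = 0 := by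
    intro d hd
    have hd0 : 0 < (d : ℕ) := by
      rcases Nat.eq_zero_or_pos (d : ℕ) with h | h
      · exact absurd (Fin.ext h) hd
      · exact h
    have hdk := d.2
    let j : Fin k := ⟨k - d, by omega⟩
    have := coeff_zero g (ι := Fin k ⊕ Fin k)
      (Sum.elim (fun l => (l : ℕ) + j) (fun l => (l : ℕ)))
      (Sum.elim (fun l => tn g j a * (g ^ (j : ℕ)) (c * M o l * tn g l b))
        (fun l => - (c * M j l * tn g l b))) (Sum.inl d) (by
        rintro (l | l) hl
        · simp only [Sum.elim_inl] at hl
          have h3 : (l : ℕ) ≡ d [MOD orderOf g] := Nat.ModEq.add_right_cancel' _ hl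
          have h4 := Nat.ModEq.eq_of_lt_of_lt h3 (by omega) (by omega)
          rw [Fin.ext h4]
        · simp only [Sum.elim_inl, Sum.elim_inr, j] at hl
          have h4 := Nat.ModEq.eq_of_lt_of_lt hl (by omega) (by omega)
          omega) (by
        intro y
        have := key j y
        simp only [Fintype.sum_sum_type, Sum.elim_inl, Sum.elim_inr, neg_mul,
          Finset.sum_neg_distrib]
        rw [this, add_neg_cancel])
    simp only [Sum.elim_inl] at this
    have h5 := (map_eq_zero_iff _ (g ^ (j : ℕ)).injective).1
      ((mul_eq_zero.1 this).resolve_left (tn_ne_zero g _ a ha))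
    exact (mul_eq_zero.1 ((mul_eq_zero.1 h5).resolve_right (tn_ne_zero g _ b hb))).resolve_left hc
  constructor
  · intro h0
    obtain ⟨y, hy⟩ := h2
    apply hy
    rw [Finset.sum_eq_zero, mul_zero]
    intro l _
    by_cases hl : l = o
    · rw [hl, h0, zero_mul]
    · rw [hz l hl, zero_mul]
  · set u : Fin k := ⟨1, hk⟩ with hu
    have := coeff_zero g (fun l : Fin k => (l : ℕ))
      (fun l => c * M u l * tn g l b - if l = u then a * g (c * M o o) else 0) u (by
        intro l hl
        exact Fin.ext (Nat.ModEq.eq_of_lt_of_lt hl (by omega) (by omega))) (by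
        intro y
        have h3 := key u y
        rw [Finset.sum_eq_single o] at h3
        · simp only [sub_mul, Finset.sum_sub_distrib, ite_mul, zero_mul, Finset.sum_ite_eq',
            Finset.mem_univ, if_true]
          rw [← h3]
          simp [hu, ho, tn]
        · intro l _ hl
          simp [hz l hl]
        · simp)
    simp only [if_true] at this
    have ht : tn g (u : ℕ) b = b := tn_one g b
    rw [ht] at this
    exact (sub_eq_zero.1 this).symm

end aux

/-- for `1 < k < m`, two linearized Reed–Solomon systems with the same
parameter `s` are equivalent iff their sets of norms coincide up to multiplication by a
nonzero element `ξ ∈ F_q`. -/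
theorem stmt6 (q m k s t : ℕ) (hq : IsPrimePow q) (hk1 : 1 < k) (hkm : k < m)
    (hs1 : 1 ≤ s) (hsm' : s ≤ m) (hsm : Nat.gcd s m = 1)
    (K L : Type*) [Field K] [Fintype K] [Field L] [Fintype L] [Algebra K L]
    (hcardK : Fintype.card K = q) (hrank : Module.finrank K L = m)
    (α β : Fin t → L) (hα : ∀ i, α i ≠ 0) (hβ : ∀ i, β i ≠ 0)
    (hαinj : Function.Injective fun i => normS q s m (α i))
    (hβinj : Function.Injective fun j => normS q s m (β j)) :
    sysEquiv (fun i => lrsComp q s k (α i)) (fun j => lrsComp q s k (β j)) ↔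
      ∃ ξ : K, ξ ≠ 0 ∧
        (Set.range fun j => normS q s m (β j)) =
          algebraMap K L ξ • (Set.range fun i => normS q s m (α i)) := by
  subst hcardK
  subst hrank
  set g := thetaS K L s with hg
  have hord : orderOf g = Module.finrank K L := orderOf_thetaS s hsm
  have hnorm : ∀ x : L, normS (Fintype.card K) s (Module.finrank K L) x =
      algebraMap K L (Algebra.norm K x) := by
    intro x
    rw [normS, truncNorm_eq, tn_orderOf _ hord]
  have hcomp : ∀ x : L, lrsComp (Fintype.card K) s k x =
      Set.range fun y : L => fun i : Fin k => tn g i x * (g ^ (i : ℕ)) y := by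
    intro x
    simp only [lrsComp, truncNorm_eq, hg, thetaS_pow]
  have hgn : ∀ x : L, Algebra.norm K (g x) = Algebra.norm K x := fun x =>
    Algebra.norm_eq_of_algEquiv g x
  have hinj := (algebraMap K L).injective
  have hN0 : ∀ x : L, x ≠ 0 → Algebra.norm K x ≠ 0 := fun x hx => Algebra.norm_ne_zero_iff.2 hx
  simp only [hnorm, sysEquiv, hcomp] at *
  constructor
  · rintro ⟨A, γ, σ, hγ, hA⟩
    rcases Nat.eq_zero_or_pos t with rfl | ht
    · exact ⟨1, one_ne_zero, by simp [Set.range_eq_empty]⟩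
    set M := LinearMap.toMatrix' (A : (Fin k → L) →ₗ[L] (Fin k → L)) with hM
    have hAM : ∀ v j, A v j = ∑ l, M j l * v l := by
      intro v j
      have h0 : M.mulVec v = A v := LinearMap.toMatrix'_mulVec _ _
      rw [← h0]; rfl
    have hr : ∀ i, _ := fun i => rigid g k hk1 (by omega) M (α i) (β (σ i)) (γ i) (hγ i) (hα i)
      (hβ _) (by
        intro y
        have h1 : γ i • A (fun l : Fin k => tn g l (β (σ i)) * (g ^ (l : ℕ)) y) ∈
            γ i • (⇑A '' Set.range fun y : L => fun l : Fin k =>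
              tn g l (β (σ i)) * (g ^ (l : ℕ)) y) :=
          Set.smul_mem_smul_set ⟨_, ⟨y, rfl⟩, rfl⟩
        rw [← hA i] at h1
        obtain ⟨x, hx⟩ := h1
        refine ⟨x, fun j => ?_⟩
        have := congrFun hx j
        simp only [Pi.smul_apply, hAM, smul_eq_mul] at this
        exact this) (by
        have h1 : (fun l : Fin k => tn g l (α i) * (g ^ (l : ℕ)) 1) ∈
            Set.range fun y : L => fun l : Fin k => tn g l (α i) * (g ^ (l : ℕ)) y := ⟨1, rfl⟩
        rw [hA i] at h1
        obtain ⟨_, ⟨_, ⟨y, rfl⟩, rfl⟩, hx⟩ := h1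
        refine ⟨y, ?_⟩
        have := congrFun hx ⟨0, by omega⟩
        simp only [Pi.smul_apply, hAM, smul_eq_mul] at this
        rw [this]
        simp [tn])
    set p := M ⟨0, by omega⟩ ⟨0, by omega⟩ with hp
    set r := M ⟨1, hk1⟩ ⟨1, hk1⟩ with hrr
    have hp0 : p ≠ 0 := (hr ⟨0, ht⟩).1
    have hr0 : r ≠ 0 := by
      intro h0
      have := (hr ⟨0, ht⟩).2
      rw [h0] at this
      simp [hα, hγ, hp0] at this
    have hrel : ∀ i, Algebra.norm K (β (σ i)) =
        Algebra.norm K p / Algebra.norm K r * Algebra.norm K (α i) := by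
      intro i
      have := congrArg (Algebra.norm K) (hr i).2
      simp only [map_mul, hgn] at this
      have h1 := hN0 _ hr0
      have h2 := hN0 _ (hγ i)
      field_simp
      apply mul_left_cancel₀ h2
      linear_combination -this
    refine ⟨Algebra.norm K p / Algebra.norm K r, div_ne_zero (hN0 _ hp0) (hN0 _ hr0), ?_⟩
    rw [← σ.surjective.range_comp]
    ext z
    simp only [Set.mem_range, Set.mem_smul_set, Function.comp, hrel, map_mul, smul_eq_mul]
    constructor
    · rintro ⟨i, rfl⟩
      exact ⟨_, ⟨i, rfl⟩, rfl⟩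
    · rintro ⟨_, ⟨i, rfl⟩, rfl⟩
      exact ⟨i, rfl⟩
  · rintro ⟨ξ, hξ, hset⟩
    have hex : ∀ i, ∃ j, Algebra.norm K (β j) = ξ * Algebra.norm K (α i) := by
      intro i
      have h1 : algebraMap K L ξ • algebraMap K L (Algebra.norm K (α i)) ∈
          Set.range fun j => algebraMap K L (Algebra.norm K (β j)) := by
        rw [hset]
        exact Set.smul_mem_smul_set ⟨i, rfl⟩
      obtain ⟨j, hj⟩ := h1
      refine ⟨j, hinj ?_⟩
      simpa using hj
    choose f hf using hex
    have hfinj : Function.Injective f := by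
      intro i j hij
      apply hαinj
      have h1 := hf i
      rw [hij, hf j] at h1
      exact congrArg _ (mul_left_cancel₀ hξ h1).symm
    let σ : Equiv.Perm (Fin t) := Equiv.ofBijective f (Finite.injective_iff_bijective.1 hfinj)
    obtain ⟨w, hw⟩ := FiniteField.norm_surjective K L ξ
    have hw0 : w ≠ 0 := by
      rintro rfl
      exact hξ (by rw [← hw, Algebra.norm_zero])
    have hc : ∀ i, ∃ b : L, b ≠ 0 ∧ β (f i) * g b = w * α i * b := by
      intro i
      have hwa : w * α i ≠ 0 := mul_ne_zero hw0 (hα i)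
      obtain ⟨b, hb, hb2⟩ := hilbert90 g (β (f i) / (w * α i)) (by omega) (by
        rw [hord, tn_orderOf g hord, div_eq_mul_inv, map_mul (Algebra.norm K),
          Algebra.norm_inv, hf, map_mul (Algebra.norm K), hw, mul_inv_cancel₀, map_one]
        exact mul_ne_zero hξ (hN0 _ (hα i)))
      refine ⟨b, hb, ?_⟩
      rw [div_mul_eq_mul_div, div_eq_iff hwa] at hb2
      linear_combination hb2
    choose b hb hb2 using hc
    have hrel : ∀ i (j : ℕ) y, tn g j (β (f i)) * (g ^ j) (b i * y) =
        tn g j w * b i * (tn g j (α i) * (g ^ j) y) := by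
      intro i j y
      have h1 := congrArg (tn g j) (hb2 i)
      simp only [tn_mul] at h1
      have h2 := tn_apply_mul g j (b i)
      have h3 := tn_ne_zero g j _ (hb i)
      rw [map_mul]
      apply mul_left_cancel₀ h3
      linear_combination (-(tn g j (β (f i)) * (g ^ j) y)) * h2 + (b i * (g ^ j) y) * h1
    refine ⟨LinearEquiv.piCongrRight fun j : Fin k =>
      LinearEquiv.smulOfNeZero L L (tn g j w)⁻¹ (inv_ne_zero (tn_ne_zero g j w hw0)),
      fun i => (b i)⁻¹, σ, fun i => inv_ne_zero (hb i), fun i => ?_⟩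
    have hE : ∀ y, (fun j : Fin k => tn g j (α i) * (g ^ (j : ℕ)) y) =
        (b i)⁻¹ • (LinearEquiv.piCongrRight fun j : Fin k =>
          LinearEquiv.smulOfNeZero L L (tn g j w)⁻¹ (inv_ne_zero (tn_ne_zero g j w hw0)))
          (fun j : Fin k => tn g j (β (σ i)) * (g ^ (j : ℕ)) (b i * y)) := by
      intro y
      ext j
      have h1 := hrel i j y
      have h2 := tn_ne_zero g j w hw0
      have h3 := hb i
      simp only [Pi.smul_apply, LinearEquiv.piCongrRight_apply,
        LinearEquiv.smulOfNeZero_apply, smul_eq_mul]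
      change _ = (b i)⁻¹ * ((tn g j w)⁻¹ * (tn g j (β (f i)) * (g ^ (j : ℕ)) (b i * y)))
      rw [h1]
      field_simp
    ext v
    constructor
    · rintro ⟨y, rfl⟩
      dsimp only
      rw [hE y]
      exact Set.smul_mem_smul_set ⟨_, ⟨b i * y, rfl⟩, rfl⟩
    · rintro ⟨_, ⟨_, ⟨y, rfl⟩, rfl⟩, rfl⟩
      refine ⟨(b i)⁻¹ * y, ?_⟩
      dsimp only
      rw [hE, mul_inv_cancel_left₀ (hb i)]
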